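/- arXiv:solv-int/9909002 — 2 statements merged into one kernel-verified Lean document; each statement's English description precedes it below -/
import Mathlib

section
/- Let f : ℤ≥0 × ℤ≥0 → ℂ satisfy the multiplied-out cross-ratio equation (q') at every (n,m) and the multiplied-out constraint (c') with parameter γ = 2 at every (n,m), with initial conditions f_{0,0} = f_{1,0} = f_{0,1} = 0, f_{2,0} = 1, f_{0,2} = −1, f_{1,1} = 2i/π (the discrete Z²). Then f is an immersion: for any two adjacent elementary quadrilaterals, the interiors of the convex hulls of their four vertices are disjoint. -/
open Complex

noncomputable section

/-- Vertex set of the elementary quadrilateral at `(n,m)`. -/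
def quadVerts (f : ℕ → ℕ → ℂ) (n m : ℕ) : Set ℂ :=
  {f n m, f (n+1) m, f (n+1) (m+1), f n (m+1)}

/-- Interior of the convex hull of the elementary quadrilateral at `(n,m)`. -/
def quadInt (f : ℕ → ℕ → ℂ) (n m : ℕ) : Set ℂ :=
  interior (convexHull ℝ (quadVerts f n m))

/-- `f` is an immersion: interiors of (convex hulls of) adjacent elementary
quadrilaterals are disjoint. -/
def IsImmersion (f : ℕ → ℕ → ℂ) : Prop :=
  ∀ n m : ℕ,
    Disjoint (quadInt f n m) (quadInt f (n+1) m) ∧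
    Disjoint (quadInt f n m) (quadInt f n (m+1))

/-- The multiplied-out cross-ratio equation (q'). -/
def CrossRatioEq' (f : ℕ → ℕ → ℂ) : Prop :=
  ∀ n m : ℕ,
    (f n m - f (n+1) m) * (f (n+1) (m+1) - f n (m+1)) +
      (f (n+1) m - f (n+1) (m+1)) * (f n (m+1) - f n m) = 0

/-- The multiplied-out constraint (c') with parameter `γ`; for `n = 0`
(resp. `m = 0`) the corresponding term (and the corresponding denominator factor)
is absent. -/
def ConstraintC' (γ : ℂ) (f : ℕ → ℕ → ℂ) : Prop :=
  ∀ n m : ℕ,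
    if n = 0 then
      (if m = 0 then γ * f 0 0 = 0
       else γ * f 0 m * (f 0 (m+1) - f 0 (m-1)) =
         2 * (m : ℂ) * ((f 0 (m+1) - f 0 m) * (f 0 m - f 0 (m-1))))
    else if m = 0 then
      γ * f n 0 * (f (n+1) 0 - f (n-1) 0) =
        2 * (n : ℂ) * ((f (n+1) 0 - f n 0) * (f n 0 - f (n-1) 0))
    else
      γ * f n m * ((f (n+1) m - f (n-1) m) * (f n (m+1) - f n (m-1))) =
        2 * (n : ℂ) * ((f (n+1) m - f n m) * (f n m - f (n-1) m)) * (f n (m+1) - f n (m-1)) +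
        2 * (m : ℂ) * ((f n (m+1) - f n m) * (f n m - f n (m-1))) * (f (n+1) m - f (n-1) m)

/-!
The shape of an elementary quadrilateral is the ratio of its two edges at the first corner. The
cross-ratio equation turns these ratios into a recursion built from the Cayley transform
`w ↦ (w - 1) / (w + 1)`, and `f` is an immersion as soon as all of them, except at the degenerate
corner `(0, 0)`, lie in the upper half-plane: every common edge then separates the two
quadrilaterals along it.

Positivity comes from an orthogonal circle pattern with the combinatorics of the square grid.
Positive radii that satisfy Schramm's equation at every circle make the edge ratios of their kites
obey the same recursion. Such radii are found by shooting. On the diagonal, the arctangents of the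
ratios of consecutive radii satisfy a discrete Painlevé II equation; an initial value whose orbit
stays in `(0, π / 2)` exists by connectedness, and the constraint, written in radii, propagates
the solution off the diagonal. Next to the axis the radii increase and satisfy
`R (2 * k + 3) 1 * R (2 * k + 1) 1 = (k + 1) ^ 2`, so Wallis' product forces `R 1 1 = 2 / π`. This
is the initial value `f 1 1 = 2 * I / π`, and therefore the edge ratios of `f` are those of the
kites.
-/

section Separation

theorem disjoint_interior_convexHull_of_le {E : Type*} [AddCommGroup E] [Module ℝ E]
    [TopologicalSpace E] [IsTopologicalAddGroup E] [ContinuousSMul ℝ E]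
    {l : E →L[ℝ] ℝ} (hl : l ≠ 0) {c : ℝ} {s t : Set E}
    (hs : ∀ x ∈ s, c ≤ l x) (ht : ∀ x ∈ t, l x ≤ c) :
    Disjoint (interior (convexHull ℝ s)) (interior (convexHull ℝ t)) := by
  have hopen : IsOpenMap l := l.isOpenMap_of_ne_zero hl
  have hs' : interior (convexHull ℝ s) ⊆ l ⁻¹' Set.Ioi c := by
    rw [← interior_Ici, hopen.preimage_interior_eq_interior_preimage l.continuous]
    exact interior_mono (convexHull_min hs (convex_halfSpace_ge l.isLinear c))
  have ht' : interior (convexHull ℝ t) ⊆ l ⁻¹' Set.Iio c := by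
    rw [← interior_Iic, hopen.preimage_interior_eq_interior_preimage l.continuous]
    exact interior_mono (convexHull_min ht (convex_halfSpace_le l.isLinear c))
  exact ((Set.Iio_disjoint_Ioi_of_le le_rfl).symm.preimage l).mono hs' ht'

theorem disjoint_interior_convexHull_of_im_div {e p : ℂ} (he : e ≠ 0) {s t : Set ℂ}
    (hs : ∀ x ∈ s, 0 ≤ ((x - p) / e).im) (ht : ∀ x ∈ t, ((x - p) / e).im ≤ 0) :
    Disjoint (interior (convexHull ℝ s)) (interior (convexHull ℝ t)) := by
  let l : ℂ →L[ℝ] ℝ := imCLM ∘L ContinuousLinearMap.mul ℝ ℂ e⁻¹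
  have l_apply (x : ℂ) : l x = (x / e).im := by
    simp [l, div_eq_inv_mul]
  have hl : l ≠ 0 := by
    intro h
    have : l (e * I) = 0 := by simp [h]
    simp [l_apply, he] at this
  refine disjoint_interior_convexHull_of_le hl (c := l p) (fun x hx ↦ ?_) fun x hx ↦ ?_
  · simpa [l_apply, sub_div] using hs x hx
  · simpa [l_apply, sub_div] using ht x hx

end Separation

section Edges

/-- The horizontal edge of the lattice `f` issuing from `f n m`. -/
def horizEdge (f : ℕ → ℕ → ℂ) (n m : ℕ) : ℂ := f (n + 1) m - f n m

/-- The vertical edge of the lattice `f` issuing from `f n m`. -/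
def vertEdge (f : ℕ → ℕ → ℂ) (n m : ℕ) : ℂ := f n (m + 1) - f n m

/-- The shape of the elementary quadrilateral at `(n, m)`, encoded by the ratio of the two edges
issuing from `f n m`. The cross-ratio equation determines the other two edges from these. -/
def edgeRatio (f : ℕ → ℕ → ℂ) (n m : ℕ) : ℂ := vertEdge f n m / horizEdge f n m

/-- The Cayley transform of the upper half-plane. If `w` is the ratio of the two edges of a
conformal square issuing from one corner, it gives the ratio of the two edges along each of the
two adjacent corners. -/
def cayley (w : ℂ) : ℂ := (w - 1) / (w + 1)

theorem ne_zero_of_im_pos {w : ℂ} (hw : 0 < w.im) : w ≠ 0 := fun h ↦ by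
  simp [h] at hw

theorem add_one_ne_zero_of_im_pos {w : ℂ} (hw : 0 < w.im) : w + 1 ≠ 0 :=
  ne_zero_of_im_pos (by simpa using hw)

theorem cayley_im_pos {w : ℂ} (hw : 0 < w.im) : 0 < (cayley w).im := by
  have hne : w + 1 ≠ 0 := add_one_ne_zero_of_im_pos hw
  have h : (cayley w).im = 2 * w.im / normSq (w + 1) := by
    rw [cayley, div_im]
    simp only [sub_im, sub_re, add_im, add_re, one_im, one_re]
    ring
  rw [h]
  exact div_pos (by linarith) (normSq_pos.mpr hne)

theorem im_div_self (z : ℂ) : (z / z).im = 0 := by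
  rcases eq_or_ne z 0 with rfl | hz <;> simp [*]

theorem inv_im_neg {w : ℂ} (hw : 0 < w.im) : (w⁻¹).im < 0 := by
  rw [inv_im]
  exact div_neg_of_neg_of_pos (by linarith) (normSq_pos.mpr (ne_zero_of_im_pos hw))

variable {f : ℕ → ℕ → ℂ} {n m : ℕ}

theorem horizEdge_add_vertEdge :
    horizEdge f n m + vertEdge f (n + 1) m = vertEdge f n m + horizEdge f n (m + 1) := by
  simp only [horizEdge, vertEdge]
  ring

theorem CrossRatioEq'.horizEdge_mul_add (hq : CrossRatioEq' f) (n m : ℕ) :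
    horizEdge f n m * horizEdge f n (m + 1) + vertEdge f n m * vertEdge f (n + 1) m = 0 := by
  simp only [horizEdge, vertEdge]
  linear_combination -hq n m

theorem horizEdge_ne_zero (hw : 0 < (edgeRatio f n m).im) : horizEdge f n m ≠ 0 := fun h ↦ by
  simp [edgeRatio, h] at hw

theorem vertEdge_ne_zero (hw : 0 < (edgeRatio f n m).im) : vertEdge f n m ≠ 0 := fun h ↦ by
  simp [edgeRatio, h] at hw

theorem CrossRatioEq'.vertEdge_succ (hq : CrossRatioEq' f) (hh : horizEdge f n m ≠ 0)
    (hw : edgeRatio f n m + 1 ≠ 0) :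
    vertEdge f (n + 1) m = cayley (edgeRatio f n m) * horizEdge f n m := by
  have hv : vertEdge f n m = edgeRatio f n m * horizEdge f n m := (div_mul_cancel₀ _ hh).symm
  have h₁ := horizEdge_add_vertEdge (f := f) (n := n) (m := m)
  have h₂ := hq.horizEdge_mul_add n m
  rw [cayley, div_mul_eq_mul_div, eq_div_iff hw]
  apply mul_left_cancel₀ hh
  rw [hv] at h₁ h₂
  linear_combination horizEdge f n m * h₁ + h₂

theorem CrossRatioEq'.horizEdge_succ (hq : CrossRatioEq' f) (hh : horizEdge f n m ≠ 0)
    (hw : edgeRatio f n m + 1 ≠ 0) :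
    horizEdge f n (m + 1) = -cayley (edgeRatio f n m) * vertEdge f n m := by
  have hv : vertEdge f n m = edgeRatio f n m * horizEdge f n m := (div_mul_cancel₀ _ hh).symm
  have h₁ := horizEdge_add_vertEdge (f := f) (n := n) (m := m)
  have h₂ := hq.vertEdge_succ hh hw
  rw [h₂] at h₁
  rw [cayley] at h₁ ⊢
  field_simp at h₁ ⊢
  rw [hv] at h₁ ⊢
  linear_combination -h₁

theorem im_div_vertEdge_nonneg_of_mem_quadVerts (hq : CrossRatioEq' f)
    (hw : 0 < (edgeRatio f n m).im) :
    ∀ x ∈ quadVerts f n m, 0 ≤ ((x - f (n + 1) m) / vertEdge f (n + 1) m).im := by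
  have hh := horizEdge_ne_zero hw
  have hw1 := add_one_ne_zero_of_im_pos hw
  have hv' := hq.vertEdge_succ hh hw1
  have hc := cayley_im_pos hw
  have hc0 : cayley (edgeRatio f n m) ≠ 0 := ne_zero_of_im_pos hc
  have hne : vertEdge f (n + 1) m ≠ 0 := hv' ▸ mul_ne_zero hc0 hh
  have h_corner : (f n m - f (n + 1) m) / vertEdge f (n + 1) m = -(cayley (edgeRatio f n m))⁻¹ := by
    rw [show f n m - f (n + 1) m = -horizEdge f n m by simp [horizEdge], hv']
    field_simp
  have h_diag : (f n (m + 1) - f (n + 1) m) / vertEdge f (n + 1) m = edgeRatio f n m + 1 := by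
    rw [div_eq_iff hne, hv', ← mul_assoc, mul_comm _ (cayley _), cayley, div_mul_cancel₀ _ hw1,
      sub_mul, edgeRatio, div_mul_cancel₀ _ hh, one_mul, vertEdge, horizEdge]
    ring
  rintro x (rfl | rfl | rfl | rfl)
  · simpa [h_corner] using (inv_im_neg hc).le
  · simp
  · simp [vertEdge, im_div_self]
  · simpa [h_diag] using hw.le

theorem im_div_vertEdge_nonpos_of_mem_quadVerts (hq : CrossRatioEq' f)
    (hw : 0 < (edgeRatio f n m).im) :
    ∀ x ∈ quadVerts f n m, ((x - f n m) / vertEdge f n m).im ≤ 0 := by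
  have hv := vertEdge_ne_zero hw
  have h_right : (f (n + 1) m - f n m) / vertEdge f n m = (edgeRatio f n m)⁻¹ := by
    rw [edgeRatio, inv_div, horizEdge]
  have h_diag : (f (n + 1) (m + 1) - f n m) / vertEdge f n m =
      1 - cayley (edgeRatio f n m) := by
    rw [show f (n + 1) (m + 1) - f n m = vertEdge f n m + horizEdge f n (m + 1) by
        simp only [vertEdge, horizEdge]; ring,
      hq.horizEdge_succ (horizEdge_ne_zero hw) (add_one_ne_zero_of_im_pos hw)]
    field_simp
    ring
  rintro x (rfl | rfl | rfl | rfl)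
  · simp
  · simpa [h_right] using (inv_im_neg hw).le
  · simpa [h_diag] using (cayley_im_pos hw).le
  · simp [vertEdge, im_div_self]

theorem im_div_horizEdge_nonpos_of_mem_quadVerts (hq : CrossRatioEq' f)
    (hw : 0 < (edgeRatio f n m).im) :
    ∀ x ∈ quadVerts f n m, ((x - f n (m + 1)) / horizEdge f n (m + 1)).im ≤ 0 := by
  have hh := horizEdge_ne_zero hw
  have hv := vertEdge_ne_zero hw
  have hw1 := add_one_ne_zero_of_im_pos hw
  have hh' := hq.horizEdge_succ hh hw1
  have hc := cayley_im_pos hw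
  have hc0 : cayley (edgeRatio f n m) ≠ 0 := ne_zero_of_im_pos hc
  have hne : horizEdge f n (m + 1) ≠ 0 := hh' ▸ mul_ne_zero (neg_ne_zero.mpr hc0) hv
  have h_corner : (f n m - f n (m + 1)) / horizEdge f n (m + 1) = (cayley (edgeRatio f n m))⁻¹ := by
    rw [show f n m - f n (m + 1) = -vertEdge f n m by simp [vertEdge], hh']
    field_simp
  have h_diag : (f (n + 1) m - f n (m + 1)) / horizEdge f n (m + 1) =
      1 + (edgeRatio f n m)⁻¹ := by
    have hr : cayley (edgeRatio f n m) * (vertEdge f n m + horizEdge f n m) =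
        vertEdge f n m - horizEdge f n m := by
      have : edgeRatio f n m * horizEdge f n m = vertEdge f n m := div_mul_cancel₀ _ hh
      rw [cayley, div_mul_eq_mul_div, div_eq_iff hw1, ← this]
      ring
    rw [div_eq_iff hne, hh', edgeRatio, inv_div, ← edgeRatio]
    field_simp
    rw [mul_comm _ (cayley _), hr, vertEdge, horizEdge]
    ring
  rintro x (rfl | rfl | rfl | rfl)
  · simpa [h_corner] using (inv_im_neg hc).le
  · simpa [h_diag] using (inv_im_neg hw).le
  · simp [horizEdge, im_div_self]
  · simp

theorem im_div_horizEdge_nonneg_of_mem_quadVerts (hq : CrossRatioEq' f)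
    (hw : 0 < (edgeRatio f n m).im) :
    ∀ x ∈ quadVerts f n m, 0 ≤ ((x - f n m) / horizEdge f n m).im := by
  have hh := horizEdge_ne_zero hw
  have h_diag : (f (n + 1) (m + 1) - f n m) / horizEdge f n m =
      1 + cayley (edgeRatio f n m) := by
    rw [show f (n + 1) (m + 1) - f n m = horizEdge f n m + vertEdge f (n + 1) m by
        simp only [vertEdge, horizEdge]; ring,
      hq.vertEdge_succ hh (add_one_ne_zero_of_im_pos hw)]
    field_simp
  rintro x (rfl | rfl | rfl | rfl)
  · simp
  · simp [horizEdge, im_div_self]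
  · simpa [h_diag] using (cayley_im_pos hw).le
  · simpa [← vertEdge.eq_def, ← edgeRatio.eq_def] using hw.le

theorem isImmersion_of_edgeRatio_im_pos (hq : CrossRatioEq' f) (h10 : f 1 0 = f 0 0)
    (h01 : f 0 1 = f 0 0) (hw : ∀ n m, (n, m) ≠ (0, 0) → 0 < (edgeRatio f n m).im) :
    IsImmersion f := by
  refine fun n m ↦ ⟨?_, ?_⟩
  · have hw' := hw (n + 1) m (by simp)
    refine disjoint_interior_convexHull_of_im_div (vertEdge_ne_zero hw') ?_
      (im_div_vertEdge_nonpos_of_mem_quadVerts hq hw')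
    by_cases h : (n, m) = (0, 0)
    · obtain ⟨rfl, rfl⟩ := Prod.mk.inj h
      rintro x (rfl | rfl | rfl | rfl)
      all_goals simp [h10, h01, vertEdge, im_div_self]
    · exact im_div_vertEdge_nonneg_of_mem_quadVerts hq (hw n m h)
  · have hw' := hw n (m + 1) (by simp)
    refine (disjoint_interior_convexHull_of_im_div (horizEdge_ne_zero hw')
      (im_div_horizEdge_nonneg_of_mem_quadVerts hq hw') ?_).symm
    by_cases h : (n, m) = (0, 0)
    · obtain ⟨rfl, rfl⟩ := Prod.mk.inj h
      rintro x (rfl | rfl | rfl | rfl)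
      all_goals simp [h10, h01, horizEdge, im_div_self]
    · exact im_div_horizEdge_nonpos_of_mem_quadVerts hq (hw n m h)

end Edges

section CirclePattern

open Filter
open scoped Real Topology

/-- The cotangent of `arctan (x / r) + arctan (y / r)`. When a circle of radius `r` meets
circles of radii `x` and `y` orthogonally, this is the cotangent of half the total angle of the
two corresponding kites at its centre. -/
def cotAdd (r x y : ℝ) : ℝ := (r ^ 2 - x * y) / (r * (x + y))

/-- The relation between the radius `r` of a circle of an orthogonal circle pattern and the radii
`a`, `b`, `c`, `d` of its neighbours in cyclic order: the angles of the four kites at its centre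
add up to `2 * π`. -/
def SchrammEq (r a b c d : ℝ) : Prop :=
  r ^ 2 * (a + b + c + d) = a * b * c + b * c * d + c * d * a + d * a * b

/-- The constraint (c') with `γ = 2` at an intersection point `(n, m)` of the circle pattern,
written in the radii of the circles through it, which are centred at its eastern, northern,
western and southern neighbours; multiplied out from
`n * (E - W) / (E + W) + m * (N - S) / (N + S) = 1`. -/
def RadiiConstraint (n m E N W S : ℝ) : Prop :=
  n * (E - W) * (N + S) + m * (N - S) * (E + W) = (E + W) * (N + S)

/-- A relation between the radius `r` of the circle centred at `(n, m)` and the radii `x`, `y`, `z`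
of three consecutive diagonal neighbours, in counterclockwise order. The weights `(p, q)` are
`(n, m)` if the omitted neighbour is the northwestern or southeastern one and `(m, -n)` if it is
the southwestern or northeastern one. -/
def PetalRel (p q r x y z : ℝ) : Prop := p * cotAdd r x y + q * cotAdd r y z = 0

theorem cotAdd_comm (r x y : ℝ) : cotAdd r x y = cotAdd r y x := by
  rw [cotAdd, cotAdd, mul_comm x, add_comm x]

theorem cotAdd_eq_zero_iff {r x y : ℝ} (hr : r ≠ 0) (hxy : x + y ≠ 0) :
    cotAdd r x y = 0 ↔ x * y = r ^ 2 := by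
  rw [cotAdd, div_eq_zero_iff, or_iff_left (mul_ne_zero hr hxy), sub_eq_zero, eq_comm]

theorem cotAdd_add_cotAdd_eq_zero_iff {r a b c d : ℝ} (hr : r ≠ 0) (hab : a + b ≠ 0)
    (hcd : c + d ≠ 0) : cotAdd r a b + cotAdd r c d = 0 ↔ SchrammEq r a b c d := by
  rw [cotAdd, cotAdd, SchrammEq, div_add_div _ _ (mul_ne_zero hr hab) (mul_ne_zero hr hcd),
    div_eq_zero_iff, or_iff_left (mul_ne_zero (mul_ne_zero hr hab) (mul_ne_zero hr hcd)),
    ← sub_eq_zero (a := r ^ 2 * _),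
    show (r ^ 2 - a * b) * (r * (c + d)) + r * (a + b) * (r ^ 2 - c * d) =
      r * (r ^ 2 * (a + b + c + d) - (a * b * c + b * c * d + c * d * a + d * a * b)) by ring,
    mul_eq_zero, or_iff_right hr]

theorem SchrammEq.rotate {r a b c d : ℝ} (h : SchrammEq r a b c d) : SchrammEq r b c d a := by
  rw [SchrammEq] at h ⊢
  linear_combination h

theorem SchrammEq.mirror {r a b c d : ℝ} (h : SchrammEq r a b c d) : SchrammEq r a d c b := by
  rw [SchrammEq] at h ⊢
  linear_combination h

namespace RadiiConstraint

variable {n m E N W S : ℝ}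

theorem flip_horizontal (h : RadiiConstraint n m E N W S) : RadiiConstraint (-n) m W N E S := by
  rw [RadiiConstraint] at h ⊢
  linear_combination h

theorem flip_vertical (h : RadiiConstraint n m E N W S) : RadiiConstraint n (-m) E S W N := by
  rw [RadiiConstraint] at h ⊢
  linear_combination h

theorem cotAdd_east_north (h : RadiiConstraint n m E N W S) (hE : E ≠ 0) (hN : N ≠ 0)
    (hEW : E + W ≠ 0) (hNS : N + S ≠ 0) :
    m * cotAdd E N S + n * cotAdd N E W = ((m - n + 1) * (E / N) - (m - n - 1) * (N / E)) / 2 := by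
  rw [RadiiConstraint] at h
  rw [cotAdd, cotAdd]
  field_simp
  linear_combination (E ^ 2 + N ^ 2) * h

end RadiiConstraint

theorem PetalRel.southeast_of_northwest {n m R A C D X Y : ℝ} (h : PetalRel n m R C D A)
    (h₁ : RadiiConstraint (n + 1) m X A R D) (h₂ : RadiiConstraint n (m - 1) D R C Y)
    (hR : 0 < R) (hD : 0 < D) (hA : 0 < A) (hC : 0 ≤ C) (hX : 0 < X) (hY : 0 ≤ Y) :
    PetalRel (n + 1) (m - 1) D X R Y := by
  have e₁ := h₁.flip_horizontal.flip_vertical.cotAdd_east_north hR.ne' hD.ne'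
    (by positivity) (by positivity)
  have e₂ := h₂.cotAdd_east_north hD.ne' hR.ne' (by positivity) (by positivity)
  rw [PetalRel, cotAdd_comm R C D] at h
  rw [PetalRel, cotAdd_comm D X R]
  linear_combination e₂ - e₁ - h

theorem PetalRel.northeast_of_southwest {n m Q A B D X Y : ℝ} (h : PetalRel m (-n) Q D A B)
    (h₁ : RadiiConstraint n (m + 1) A X B Q) (h₂ : RadiiConstraint (n + 1) m Y A Q D)
    (hQ : 0 < Q) (hA : 0 < A) (hB : 0 < B) (hD : 0 ≤ D) (hX : 0 < X) (hY : 0 < Y) :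
    PetalRel (m + 1) (-(n + 1)) A X Q Y := by
  have e₁ := h₁.flip_vertical.cotAdd_east_north hA.ne' hQ.ne' (by positivity) (by positivity)
  have e₂ := h₂.flip_horizontal.cotAdd_east_north hQ.ne' hA.ne' (by positivity) (by positivity)
  rw [PetalRel, cotAdd_comm Q D A] at h
  rw [PetalRel, cotAdd_comm A X Q]
  linear_combination e₂ - e₁ - h

section

variable {n m r a b c d : ℝ}

theorem SchrammEq.petalRel_rotate (h : SchrammEq r a b c d) (hr : 0 < r) (ha : 0 < a)
    (hb : 0 < b) (hc : 0 < c) (hd : 0 < d) (hp : PetalRel n m r a b c) :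
    PetalRel m (-n) r d a b := by
  have h' := (cotAdd_add_cotAdd_eq_zero_iff hr.ne' (add_pos hb hc).ne' (add_pos hd ha).ne').mpr
    h.rotate
  rw [PetalRel] at hp ⊢
  linear_combination m * h' - hp

theorem SchrammEq.petalRel_opposite (h : SchrammEq r a b c d) (hr : 0 < r) (ha : 0 < a)
    (hb : 0 < b) (hc : 0 < c) (hd : 0 < d) (hp : PetalRel n m r a b c) :
    PetalRel n m r c d a := by
  have h₁ := (cotAdd_add_cotAdd_eq_zero_iff hr.ne' (add_pos ha hb).ne' (add_pos hc hd).ne').mpr h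
  have h₂ := (cotAdd_add_cotAdd_eq_zero_iff hr.ne' (add_pos hb hc).ne' (add_pos hd ha).ne').mpr
    h.rotate
  rw [PetalRel] at hp ⊢
  linear_combination n * h₁ + m * h₂ - hp

theorem SchrammEq.of_petalRel (hn : n ≠ 0) (hr : 0 < r) (ha : 0 < a) (hb : 0 < b)
    (hc : 0 < c) (hd : 0 < d) (hp : PetalRel n m r a b c) (hp' : PetalRel m (-n) r b c d) :
    SchrammEq r a b c d := by
  rw [← cotAdd_add_cotAdd_eq_zero_iff hr.ne' (add_pos ha hb).ne' (add_pos hc hd).ne']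
  apply mul_left_cancel₀ hn
  rw [PetalRel] at hp hp'
  linear_combination hp - hp'

end

/-- The radii of the circles centred at `(m + 2 * k, m)`, computed from the radii `d m` on the
diagonal: on the axis they are given, and elsewhere the constraint at `(m + 2 * k - 1, m)` is solved
for the radius on its eastern side. -/
def radius (d : ℕ → ℝ) : ℕ → ℕ → ℝ
  | 0, m => d m
  | k + 1, 0 => k + 1
  | k + 1, m + 1 => radius d k (m + 1) *
      (((m + k + 2) * radius d (k + 1) m + (k + 1) * radius d k (m + 2)) /
        (k * radius d (k + 1) m + (m + 1 + k) * radius d k (m + 2)))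
  termination_by k m => (k, m)

section Radius

variable {d : ℕ → ℝ}

theorem radius_zero_left (d : ℕ → ℝ) (m : ℕ) : radius d 0 m = d m := by rw [radius]

theorem radius_zero_right (hd : d 0 = 0) (k : ℕ) : radius d k 0 = k := by
  cases k <;> simp [radius, hd]

theorem radius_pos (hd : d 0 = 0) (hpos : ∀ m, 0 < d (m + 1)) :
    ∀ k m, k + m ≠ 0 → 0 < radius d k m
  | k, 0, h => by
    rw [radius_zero_right hd]
    exact_mod_cast Nat.pos_of_ne_zero h
  | 0, m + 1, _ => by simpa [radius] using hpos m
  | k + 1, m + 1, _ => by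
    have hW := radius_pos hd hpos k (m + 1) (by lia)
    have hS := radius_pos hd hpos (k + 1) m (by lia)
    have hN := radius_pos hd hpos k (m + 2) (by lia)
    rw [radius]
    positivity
  termination_by k m => (k, m)

theorem radius_nonneg (hd : d 0 = 0) (hpos : ∀ m, 0 < d (m + 1)) (k m : ℕ) :
    0 ≤ radius d k m := by
  rcases eq_or_ne (k + m) 0 with h | h
  · obtain ⟨rfl, rfl⟩ := Nat.add_eq_zero_iff.mp h
    simp [radius, hd]
  · exact (radius_pos hd hpos k m h).le

theorem radiiConstraint_radius (hd : d 0 = 0) (hpos : ∀ m, 0 < d (m + 1)) (k m : ℕ) :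
    RadiiConstraint (m + 2 * k + 2) (m + 1) (radius d (k + 1) (m + 1)) (radius d k (m + 2))
      (radius d k (m + 1)) (radius d (k + 1) m) := by
  have hS := radius_pos hd hpos (k + 1) m (by lia)
  have hN := radius_pos hd hpos k (m + 2) (by lia)
  rw [RadiiConstraint, radius, mul_div_assoc']
  field_simp
  ring

theorem radiiConstraint_radius_axis (hd : d 0 = 0) (k : ℕ) (N : ℝ) :
    RadiiConstraint (2 * k + 1) 0 (radius d (k + 1) 0) N (radius d k 0) N := by
  rw [RadiiConstraint, radius_zero_right hd, radius_zero_right hd]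
  push_cast
  ring

theorem petalRel_southeast_of_northwest_radius (hd : d 0 = 0) (hpos : ∀ m, 0 < d (m + 1)) {k m : ℕ}
    (h : PetalRel (m + 2 * k + 2) (m + 2) (radius d k (m + 2)) (radius d k (m + 1))
      (radius d (k + 1) (m + 1)) (radius d k (m + 3))) :
    PetalRel (m + 2 * k + 3) (m + 1) (radius d (k + 1) (m + 1)) (radius d (k + 1) (m + 2))
      (radius d k (m + 2)) (radius d (k + 1) m) := by
  have h₁ := radiiConstraint_radius hd hpos k (m + 1)
  have h₂ := radiiConstraint_radius hd hpos k m
  have := h.southeast_of_northwest (X := radius d (k + 1) (m + 2)) (Y := radius d (k + 1) m)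
    (by convert h₁ using 1 <;> push_cast <;> ring) (by convert h₂ using 1; ring)
    (radius_pos hd hpos _ _ (by lia)) (radius_pos hd hpos _ _ (by lia))
    (radius_pos hd hpos _ _ (by lia)) (radius_nonneg hd hpos _ _)
    (radius_pos hd hpos _ _ (by lia)) (radius_nonneg hd hpos _ _)
  convert this using 1 <;> ring

theorem radius_one_mul_radius_one (hd : d 0 = 0) (hpos : ∀ m, 0 < d (m + 1)) {k : ℕ}
    (h : PetalRel (2 * k + 1) 1 (radius d k 1) (radius d k 0) (radius d (k + 1) 0)
      (radius d k 2)) :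
    radius d (k + 1) 1 * radius d k 1 = (k + 1) ^ 2 := by
  have h₁ := radiiConstraint_radius hd hpos k 0
  have h₂ := radiiConstraint_radius_axis hd k (radius d k 1)
  have hR : 0 < radius d k 1 := radius_pos hd hpos _ _ (by lia)
  have hX : 0 < radius d (k + 1) 1 := radius_pos hd hpos _ _ (by lia)
  have hD : 0 < radius d (k + 1) 0 := radius_pos hd hpos _ _ (by lia)
  have := h.southeast_of_northwest (X := radius d (k + 1) 1) (Y := radius d k 1)
    (by convert h₁ using 1 <;> push_cast <;> ring) (by convert h₂ using 1; ring)
    hR hD (radius_pos hd hpos _ _ (by lia)) (radius_nonneg hd hpos _ _) hX hR.le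
  rw [PetalRel, sub_self, zero_mul, add_zero, mul_eq_zero, or_iff_right (by positivity),
    cotAdd_eq_zero_iff hD.ne' (by positivity), radius_zero_right hd] at this
  exact_mod_cast this

theorem schrammEq_radius_of_petalRel (hd : d 0 = 0) (hpos : ∀ m, 0 < d (m + 1)) {k m : ℕ}
    (hSE : PetalRel (m + 2 * k + 3) (m + 1) (radius d (k + 1) (m + 1)) (radius d (k + 1) (m + 2))
      (radius d k (m + 2)) (radius d (k + 1) m))
    {D : ℝ} (hD : 0 ≤ D)
    (h₂ : RadiiConstraint (m + 2 * k + 3) m (radius d (k + 2) m) (radius d (k + 1) (m + 1))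
      (radius d (k + 1) m) D)
    (hSW : PetalRel m (-(m + 2 * k + 2)) (radius d (k + 1) m) D (radius d (k + 1) (m + 1))
      (radius d k (m + 1))) :
    SchrammEq (radius d (k + 1) (m + 1)) (radius d (k + 1) (m + 2)) (radius d k (m + 2))
      (radius d (k + 1) m) (radius d (k + 2) m) := by
  have h₁ := radiiConstraint_radius hd hpos k m
  have pos := radius_pos hd hpos
  have hA := pos (k + 1) (m + 1) (by lia)
  have hQ := pos (k + 1) m (by lia)
  have hX := pos k (m + 2) (by lia)
  have hY := pos (k + 2) m (by lia)
  have hNE := hSW.northeast_of_southwest h₁ (by convert h₂ using 1; ring) hQ hA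
    (pos k (m + 1) (by lia)) hD hX hY
  exact .of_petalRel (by positivity) hA (pos _ _ (by lia)) hX hQ hY hSE
    (by convert hNE using 1; ring)

theorem schrammEq_radius_succ (hd : d 0 = 0) (hpos : ∀ m, 0 < d (m + 1)) {k : ℕ}
    (h : ∀ m : ℕ, PetalRel (m + 2 * k + 1) (m + 1) (radius d k (m + 1)) (radius d k m)
      (radius d (k + 1) m) (radius d k (m + 2))) (m : ℕ) :
    SchrammEq (radius d (k + 1) (m + 1)) (radius d (k + 1) (m + 2)) (radius d k (m + 2))
      (radius d (k + 1) m) (radius d (k + 2) m) := by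
  have pos := radius_pos hd hpos
  have hSE (m : ℕ) := petalRel_southeast_of_northwest_radius hd hpos (k := k) (m := m) <| by
    convert h (m + 1) using 1 <;> push_cast <;> ring
  induction m with
  | zero =>
    have hmul := radius_one_mul_radius_one hd hpos (k := k) (by simpa using h 0)
    refine schrammEq_radius_of_petalRel hd hpos (hSE 0) (pos (k + 1) 1 (by lia)).le ?_ ?_
    · convert radiiConstraint_radius_axis hd (k + 1) (radius d (k + 1) 1) using 1 <;>
        push_cast <;> ring
    · have hQ : cotAdd (radius d (k + 1) 0) (radius d (k + 1) 1) (radius d k 1) = 0 := by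
        rw [cotAdd_eq_zero_iff (pos _ _ (by lia)).ne'
          (add_pos (pos _ _ (by lia)) (pos _ _ (by lia))).ne', hmul, radius_zero_right hd]
        push_cast
        ring
      rw [PetalRel, hQ]
      simp
  | succ m ih =>
    refine schrammEq_radius_of_petalRel hd hpos (hSE (m + 1))
      (radius_nonneg hd hpos (k + 2) m) ?_ ?_
    · convert radiiConstraint_radius hd hpos (k + 1) m using 1 <;> push_cast <;> ring
    · convert ih.petalRel_rotate (pos _ _ (by lia)) (pos _ _ (by lia)) (pos _ _ (by lia))
        (pos _ _ (by lia)) (pos _ _ (by lia)) (hSE m) using 1 <;> push_cast <;> ring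

theorem petalRel_northwest_radius (hd : d 0 = 0) (hpos : ∀ m, 0 < d (m + 1))
    (hdiag : ∀ m, cotAdd (d (m + 1)) (d m) (radius d 1 m) +
      cotAdd (d (m + 1)) (radius d 1 m) (d (m + 2)) = 0) (k m : ℕ) :
    PetalRel (m + 2 * k + 1) (m + 1) (radius d k (m + 1)) (radius d k m)
      (radius d (k + 1) m) (radius d k (m + 2)) := by
  induction k generalizing m with
  | zero =>
    simp only [PetalRel, radius_zero_left]
    linear_combination ((m : ℝ) + 1) * hdiag m
  | succ k ih =>
    have pos := radius_pos hd hpos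
    have hSE := petalRel_southeast_of_northwest_radius hd hpos (k := k) (m := m) <| by
      convert ih (m + 1) using 1 <;> push_cast <;> ring
    convert (schrammEq_radius_succ hd hpos ih m).petalRel_opposite (pos _ _ (by lia))
      (pos _ _ (by lia)) (pos _ _ (by lia)) (pos _ _ (by lia)) (pos _ _ (by lia)) hSE using 1
    push_cast
    ring

theorem radius_one_lt_succ (hd : d 0 = 0) (hpos : ∀ m, 0 < d (m + 1)) (k : ℕ) :
    radius d k 1 < radius d (k + 1) 1 := by
  have h : (2 * k + 2) * (radius d (k + 1) 1 - radius d k 1) * (radius d k 2 + (k + 1)) =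
      2 * (k + 1) * (radius d (k + 1) 1 + radius d k 1) := by
    have := radiiConstraint_radius hd hpos k 0
    rw [RadiiConstraint, radius_zero_right hd] at this
    push_cast at this
    linear_combination this
  have hN := radius_pos hd hpos k 2 (by lia)
  have hsum := add_pos (radius_pos hd hpos (k + 1) 1 (by lia)) (radius_pos hd hpos k 1 (by lia))
  have hprod : 0 < (2 * k + 2) * (radius d (k + 1) 1 - radius d k 1) * (radius d k 2 + (k + 1)) :=
    h ▸ by positivity
  exact sub_pos.mp <| pos_of_mul_pos_right (pos_of_mul_pos_left hprod (by positivity))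
    (by positivity)

theorem radius_one_mem_Icc (hd : d 0 = 0) (hpos : ∀ m, 0 < d (m + 1))
    (hmul : ∀ k : ℕ, radius d (k + 1) 1 * radius d k 1 = (k + 1) ^ 2) (k : ℕ) :
    radius d k 1 ∈ Set.Icc (k : ℝ) (k + 1) := by
  have hlt (k : ℕ) := radius_one_lt_succ hd hpos k
  have hnonneg (k : ℕ) := radius_nonneg hd hpos k 1
  refine ⟨?_, ?_⟩
  · rcases k with _ | k
    · simpa using hnonneg 0
    · push_cast
      refine le_of_sq_le_sq ?_ (hnonneg _)
      rw [← hmul k, sq]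
      exact mul_le_mul_of_nonneg_left (hlt k).le (hnonneg _)
  · refine le_of_sq_le_sq ?_ (by positivity)
    rw [← hmul k, sq]
    exact mul_le_mul_of_nonneg_right (hlt k).le (hnonneg _)

theorem radius_two_mul_one
    (hmul : ∀ k : ℕ, radius d (k + 1) 1 * radius d k 1 = (k + 1) ^ 2) (i : ℕ) :
    radius d (2 * i) 1 = d 1 * (2 * i + 1) * Real.Wallis.W i := by
  induction i with
  | zero => simp [radius_zero_left, Real.Wallis.W]
  | succ i ih =>
    have h₀ : radius d (2 * i + 1) 1 * radius d (2 * i) 1 = (2 * i + 1) ^ 2 :=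
      mod_cast hmul (2 * i)
    have h₁ : radius d (2 * i + 2) 1 * radius d (2 * i + 1) 1 = (2 * i + 2) ^ 2 := by
      convert hmul (2 * i + 1) using 2; push_cast; ring
    have h₂ : radius d (2 * i + 2) 1 = (2 * i + 2) ^ 2 / (2 * i + 1) ^ 2 * radius d (2 * i) 1 := by
      rw [div_mul_eq_mul_div, eq_div_iff (by positivity)]
      linear_combination radius d (2 * i) 1 * h₁ - radius d (2 * i + 2) 1 * h₀
    rw [show 2 * (i + 1) = 2 * i + 2 by ring, h₂, ih, Real.Wallis.W_succ]
    push_cast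
    field_simp
    ring

theorem diagonal_one_eq_two_div_pi (hd : d 0 = 0) (hpos : ∀ m, 0 < d (m + 1))
    (hmul : ∀ k : ℕ, radius d (k + 1) 1 * radius d k 1 = (k + 1) ^ 2) : d 1 = 2 / π := by
  have hwallis (i : ℕ) := radius_two_mul_one hmul i
  have hmem (i : ℕ) : d 1 * Real.Wallis.W i ∈ Set.Icc ((i : ℝ) / (i + 1 / 2)) 1 := by
    have h := radius_one_mem_Icc hd hpos hmul (2 * i)
    rw [hwallis] at h
    push_cast at h
    refine ⟨?_, ?_⟩
    · rw [div_le_iff₀ (by positivity)]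
      linarith [h.1]
    · refine le_of_mul_le_mul_right ?_ (show (0 : ℝ) < 2 * i + 1 by positivity)
      linarith [h.2]
  have hlim : Tendsto (fun i ↦ d 1 * Real.Wallis.W i) atTop (𝓝 1) :=
    tendsto_of_tendsto_of_tendsto_of_le_of_le (tendsto_natCast_div_add_atTop _)
      tendsto_const_nhds (fun i ↦ (hmem i).1) fun i ↦ (hmem i).2
  have h : d 1 * (π / 2) = 1 :=
    tendsto_nhds_unique (Real.Wallis.tendsto_W_nhds_pi_div_two.const_mul _) hlim
  rw [eq_div_iff Real.pi_ne_zero]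
  linarith

end Radius

end CirclePattern

section Shooting

open Set

variable {α : Type*} [LinearOrder α] {a b : α} (hab : a ≤ b)
  (step : ℕ → Icc a b → Icc a b → α)

/-- The orbit of the second-order recurrence given by `step`, kept in `Icc a b` by projecting each
term to this interval: an orbit reaching an endpoint through the projection has left the
interval. -/
def clampedOrbit (x₀ x₁ : Icc a b) : ℕ → Icc a b
  | 0 => x₀
  | 1 => x₁
  | m + 2 => projIcc a b hab (step m (clampedOrbit x₀ x₁ m) (clampedOrbit x₀ x₁ (m + 1)))

theorem clampedOrbit_add_two (x₀ x₁ : Icc a b) (m : ℕ) :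
    clampedOrbit hab step x₀ x₁ (m + 2) = projIcc a b hab
      (step m (clampedOrbit hab step x₀ x₁ m) (clampedOrbit hab step x₀ x₁ (m + 1))) := by
  rw [clampedOrbit]

variable {step}

theorem clampedOrbit_eq_left_of_le (hlo : ∀ m x, step m x ⟨a, left_mem_Icc.mpr hab⟩ < a)
    {x₀ x₁ : Icc a b} {j : ℕ}
    (hj : clampedOrbit hab step x₀ x₁ (j + 1) = ⟨a, left_mem_Icc.mpr hab⟩)
    {i : ℕ} (hi : j ≤ i) : clampedOrbit hab step x₀ x₁ (i + 1) = ⟨a, left_mem_Icc.mpr hab⟩ := by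
  induction i, hi using Nat.le_induction with
  | base => exact hj
  | succ i _ ih => rw [clampedOrbit_add_two, ih, projIcc_of_le_left hab (hlo _ _).le]

theorem clampedOrbit_eq_right_of_le (hhi : ∀ m x, b < step m x ⟨b, right_mem_Icc.mpr hab⟩)
    {x₀ x₁ : Icc a b} {j : ℕ}
    (hj : clampedOrbit hab step x₀ x₁ (j + 1) = ⟨b, right_mem_Icc.mpr hab⟩)
    {i : ℕ} (hi : j ≤ i) : clampedOrbit hab step x₀ x₁ (i + 1) = ⟨b, right_mem_Icc.mpr hab⟩ := by
  induction i, hi using Nat.le_induction with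
  | base => exact hj
  | succ i _ ih => rw [clampedOrbit_add_two, ih, projIcc_of_right_le hab (hhi _ _).le]

variable [TopologicalSpace α] [OrderTopology α]

theorem continuous_clampedOrbit
    (hcont : ∀ m, Continuous fun p : Icc a b × Icc a b ↦ step m p.1 p.2) (x₀ : Icc a b) :
    ∀ m, Continuous fun x₁ ↦ clampedOrbit hab step x₀ x₁ m
  | 0 => by simpa only [clampedOrbit] using continuous_const
  | 1 => continuous_id
  | m + 2 => by
    simp only [clampedOrbit_add_two]
    exact continuous_projIcc.comp <| (hcont m).comp <|
      (continuous_clampedOrbit hcont x₀ m).prodMk (continuous_clampedOrbit hcont x₀ (m + 1))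

/-- Shooting: the initial values whose orbit leaves the interval through the left endpoint and
those whose orbit leaves it through the right endpoint form two disjoint nonempty open sets, which
cannot cover a connected interval. -/
theorem exists_forall_clampedOrbit_step_mem_Icc [PreconnectedSpace (Icc a b)] (hlt : a < b)
    (hcont : ∀ m, Continuous fun p : Icc a b × Icc a b ↦ step m p.1 p.2)
    (hlo : ∀ m x, step m x ⟨a, left_mem_Icc.mpr hlt.le⟩ < a)
    (hhi : ∀ m x, b < step m x ⟨b, right_mem_Icc.mpr hlt.le⟩) (x₀ : Icc a b) :
    ∃ x₁, ∀ m, step m (clampedOrbit hlt.le step x₀ x₁ m) (clampedOrbit hlt.le step x₀ x₁ (m + 1)) ∈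
      Icc a b := by
  by_contra! hexit
  let s (m : ℕ) (x₁ : Icc a b) : α :=
    step m (clampedOrbit hlt.le step x₀ x₁ m) (clampedOrbit hlt.le step x₀ x₁ (m + 1))
  have hs (m : ℕ) : Continuous (s m) := (hcont m).comp <|
    (continuous_clampedOrbit hlt.le hcont x₀ m).prodMk
      (continuous_clampedOrbit hlt.le hcont x₀ (m + 1))
  let U : Set (Icc a b) := ⋃ m, {x₁ | s m x₁ < a}
  let V : Set (Icc a b) := ⋃ m, {x₁ | b < s m x₁}
  have hU : IsOpen U := isOpen_iUnion fun m ↦ isOpen_lt (hs m) continuous_const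
  have hV : IsOpen V := isOpen_iUnion fun m ↦ isOpen_lt continuous_const (hs m)
  have hUV : univ ⊆ U ∪ V := fun x₁ _ ↦ by
    obtain ⟨m, hm⟩ := hexit x₁
    by_cases h : a ≤ s m x₁
    · exact .inr (mem_iUnion.mpr ⟨m, not_le.mp fun h' ↦ hm ⟨h, h'⟩⟩)
    · exact .inl (mem_iUnion.mpr ⟨m, not_le.mp h⟩)
  have hU_left : (⟨a, left_mem_Icc.mpr hlt.le⟩ : Icc a b) ∈ U := mem_iUnion.mpr ⟨0, hlo 0 x₀⟩
  have hV_right : (⟨b, right_mem_Icc.mpr hlt.le⟩ : Icc a b) ∈ V := mem_iUnion.mpr ⟨0, hhi 0 x₀⟩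
  obtain ⟨x₁, -, hxU, hxV⟩ := isPreconnected_univ U V hU hV hUV ⟨_, mem_univ _, hU_left⟩
    ⟨_, mem_univ _, hV_right⟩
  obtain ⟨i, hi⟩ := mem_iUnion.mp hxU
  obtain ⟨j, hj⟩ := mem_iUnion.mp hxV
  have hleft := clampedOrbit_eq_left_of_le hlt.le hlo (x₀ := x₀) (x₁ := x₁) (j := i + 1)
    ((clampedOrbit_add_two ..).trans (projIcc_of_le_left hlt.le (le_of_lt hi)))
    (le_max_left (i + 1) (j + 1))
  have hright := clampedOrbit_eq_right_of_le hlt.le hhi (x₀ := x₀) (x₁ := x₁) (j := j + 1)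
    ((clampedOrbit_add_two ..).trans (projIcc_of_right_le hlt.le (le_of_lt hj)))
    (le_max_right (i + 1) (j + 1))
  exact hlt.ne (congrArg Subtype.val (hleft.symm.trans hright))

theorem exists_recurrence_mem_Ioo [PreconnectedSpace (Icc a b)] (hlt : a < b)
    (hcont : ∀ m, Continuous fun p : Icc a b × Icc a b ↦ step m p.1 p.2)
    (hlo : ∀ m x, step m x ⟨a, left_mem_Icc.mpr hlt.le⟩ < a)
    (hhi : ∀ m x, b < step m x ⟨b, right_mem_Icc.mpr hlt.le⟩) (x₀ : Icc a b) :
    ∃ u : ℕ → Icc a b, u 0 = x₀ ∧ (∀ m, (u (m + 1) : α) ∈ Ioo a b) ∧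
      ∀ m, (u (m + 2) : α) = step m (u m) (u (m + 1)) := by
  obtain ⟨x₁, h⟩ := exists_forall_clampedOrbit_step_mem_Icc hlt hcont hlo hhi x₀
  let u := clampedOrbit hlt.le step x₀ x₁
  refine ⟨u, by simp only [u, clampedOrbit], fun m ↦ ⟨?_, ?_⟩, fun m ↦ ?_⟩
  · refine lt_of_le_of_ne (u (m + 1)).2.1 fun ha ↦ ?_
    have hu : u (m + 1) = ⟨a, left_mem_Icc.mpr hlt.le⟩ := Subtype.ext ha.symm
    exact (hlo m (u m)).not_ge (hu ▸ (h m).1)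
  · refine lt_of_le_of_ne (u (m + 1)).2.2 fun hb ↦ ?_
    have hu : u (m + 1) = ⟨b, right_mem_Icc.mpr hlt.le⟩ := Subtype.ext hb
    exact (hhi m (u m)).not_ge (hu ▸ (h m).2)
  · simp only [u, clampedOrbit_add_two, projIcc_of_mem _ (h m)]

end Shooting

section Angles

open Set
open scoped Real

theorem cotAdd_mul_tan {r x y : ℝ} (hr : r ≠ 0) (hx : Real.cos x ≠ 0) (hy : Real.cos y ≠ 0) :
    cotAdd r (r * Real.tan x) (r * Real.tan y) = Real.cot (x + y) := by
  rw [cotAdd, Real.cot_eq_cos_div_sin, Real.cos_add, Real.sin_add, Real.tan_eq_sin_div_cos,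
    Real.tan_eq_sin_div_cos]
  field_simp

theorem cot_add_cot_eq_zero {x y : ℝ} (h : x + y = π) : Real.cot x + Real.cot y = 0 := by
  rw [eq_sub_of_add_eq' h, Real.cot_eq_cos_div_sin, Real.cot_eq_cos_div_sin, Real.cos_pi_sub,
    Real.sin_pi_sub]
  ring

/-- If `tan x` and `tan y` are the ratios of consecutive radii on the diagonal, taken before and
after a circle, this is half the angle at its centre of the kites on the two sides of the
diagonal. -/
def sideAngle (x y : ℝ) : ℝ := (π / 2 + x - y) / 2

/-- A point whose argument is the next side angle along the diagonal. Unlike the quotient of its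
coordinates, it depends continuously on `y` up to the endpoints `0` and `π / 2`. -/
def sidePoint (m : ℕ) (x y : ℝ) : ℂ :=
  ⟨(m + 1) * (Real.sin y ^ 2 * Real.cos (sideAngle x y)),
    (m + 2) * (Real.cos y ^ 2 * Real.sin (sideAngle x y)) +
      Real.sin y * Real.cos y * Real.cos (sideAngle x y)⟩

/-- The recurrence, a discrete Painlevé II equation, for the angles whose tangents are the ratios
of consecutive radii on the diagonal. -/
def angleStep (m : ℕ) (x y : ℝ) : ℝ := π / 2 + y - 2 * arg (sidePoint m x y)

theorem sideAngle_angleStep (m : ℕ) (x y : ℝ) :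
    sideAngle y (angleStep m x y) = arg (sidePoint m x y) := by
  rw [sideAngle, angleStep]
  ring

variable {x y : ℝ}

theorem sideAngle_mem_Ioo (hx : x ∈ Icc 0 (π / 2)) (hy : y ∈ Ioo 0 (π / 2)) :
    sideAngle x y ∈ Ioo 0 (π / 2) := by
  rw [sideAngle]
  constructor <;> linarith [hx.1, hx.2, hy.1, hy.2]

theorem cos_pos_of_mem_Ioo (hx : x ∈ Ioo 0 (π / 2)) : 0 < Real.cos x :=
  Real.cos_pos_of_mem_Ioo ⟨by linarith [hx.1, Real.pi_pos], hx.2⟩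

theorem sin_pos_of_mem_Ioo (hx : x ∈ Ioo 0 (π / 2)) : 0 < Real.sin x :=
  Real.sin_pos_of_mem_Ioo ⟨hx.1, by linarith [hx.2, Real.pi_pos]⟩

theorem sidePoint_zero_right_im_pos (m : ℕ) (hx : x ∈ Icc 0 (π / 2)) :
    0 < (sidePoint m x 0).im := by
  have hsin : 0 < Real.sin (sideAngle x 0) := by
    rw [sideAngle]
    exact Real.sin_pos_of_pos_of_lt_pi (by linarith [hx.1, Real.pi_pos])
      (by linarith [hx.2, Real.pi_pos])
  have him : (sidePoint m x 0).im = (m + 2) * Real.sin (sideAngle x 0) := by simp [sidePoint]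
  rw [him]
  positivity

theorem sidePoint_re_pos (m : ℕ) (hx : x ∈ Icc 0 (π / 2)) (hy : y ∈ Ioc 0 (π / 2)) :
    0 < (sidePoint m x y).re := by
  have hsin : 0 < Real.sin y :=
    Real.sin_pos_of_pos_of_lt_pi hy.1 (by linarith [hy.2, Real.pi_pos])
  have hcos : 0 < Real.cos (sideAngle x y) := by
    rw [sideAngle]
    exact Real.cos_pos_of_mem_Ioo ⟨by linarith [hx.1, hy.2, Real.pi_pos], by linarith [hx.2, hy.1]⟩
  exact mul_pos (by positivity) (mul_pos (pow_pos hsin 2) hcos)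

theorem sidePoint_mem_slitPlane (m : ℕ) (hx : x ∈ Icc 0 (π / 2)) (hy : y ∈ Icc 0 (π / 2)) :
    sidePoint m x y ∈ slitPlane := by
  rcases hy.1.eq_or_lt with rfl | hy₀
  · exact .inr (sidePoint_zero_right_im_pos m hx).ne'
  · exact .inl (sidePoint_re_pos m hx ⟨hy₀, hy.2⟩)

theorem angleStep_zero_right (m : ℕ) (hx : x ∈ Icc 0 (π / 2)) : angleStep m x 0 = -(π / 2) := by
  have harg : arg (sidePoint m x 0) = π / 2 := by
    rw [arg_eq_pi_div_two_iff]
    exact ⟨by simp [sidePoint], sidePoint_zero_right_im_pos m hx⟩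
  rw [angleStep, harg]
  ring

theorem angleStep_pi_div_two_right (m : ℕ) (hx : x ∈ Icc 0 (π / 2)) :
    angleStep m x (π / 2) = π := by
  have harg : arg (sidePoint m x (π / 2)) = 0 := by
    rw [arg_eq_zero_iff]
    exact ⟨(sidePoint_re_pos m hx ⟨Real.pi_div_two_pos, le_rfl⟩).le, by simp [sidePoint]⟩
  rw [angleStep, harg]
  ring

theorem continuous_angleStep (m : ℕ) :
    Continuous fun p : Icc 0 (π / 2) × Icc 0 (π / 2) ↦ angleStep m p.1 p.2 := by
  have hpoint : Continuous fun p : Icc 0 (π / 2) × Icc 0 (π / 2) ↦ sidePoint m p.1 p.2 := by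
    simp only [sidePoint, sideAngle, mk_eq_add_mul_I]
    fun_prop
  have harg : Continuous fun p : Icc 0 (π / 2) × Icc 0 (π / 2) ↦ arg (sidePoint m p.1 p.2) :=
    continuousOn_arg.comp_continuous hpoint fun p ↦ sidePoint_mem_slitPlane m p.1.2 p.2.2
  simp only [angleStep]
  fun_prop

theorem tan_arg_sidePoint (m : ℕ) (hx : x ∈ Icc 0 (π / 2)) (hy : y ∈ Ioo 0 (π / 2)) :
    Real.tan (arg (sidePoint m x y)) =
      ((m + 2) * Real.tan (sideAngle x y) + Real.tan y) / ((m + 1) * Real.tan y ^ 2) := by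
  have hsin := sin_pos_of_mem_Ioo hy
  have hcos := cos_pos_of_mem_Ioo hy
  have hcos' := cos_pos_of_mem_Ioo (sideAngle_mem_Ioo hx hy)
  rw [tan_arg, sidePoint, Real.tan_eq_sin_div_cos, Real.tan_eq_sin_div_cos]
  field_simp

theorem exists_diagonal_angles : ∃ a : ℕ → ℝ, a 0 = π / 2 ∧ (∀ m, a (m + 1) ∈ Ioo 0 (π / 2)) ∧
    ∀ m : ℕ, Real.tan (sideAngle (a (m + 1)) (a (m + 2))) =
      ((m + 2) * Real.tan (sideAngle (a m) (a (m + 1))) + Real.tan (a (m + 1))) /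
        ((m + 1) * Real.tan (a (m + 1)) ^ 2) := by
  have : PreconnectedSpace (Icc 0 (π / 2)) := Subtype.preconnectedSpace isPreconnected_Icc
  obtain ⟨u, hu₀, hu, hstep⟩ := exists_recurrence_mem_Ioo (step := fun m x y ↦ angleStep m x y)
    Real.pi_div_two_pos continuous_angleStep
    (fun m x ↦ by rw [angleStep_zero_right m x.2]; linarith [Real.pi_pos])
    (fun m x ↦ by rw [angleStep_pi_div_two_right m x.2]; linarith [Real.pi_pos])
    ⟨π / 2, right_mem_Icc.mpr Real.pi_div_two_pos.le⟩
  refine ⟨fun m ↦ u m, by simp [hu₀], hu, fun m ↦ ?_⟩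
  simp only [hstep, sideAngle_angleStep, tan_arg_sidePoint m (u m).2 (hu m)]

/-- The radii on the diagonal whose consecutive ratios are the tangents of the angles `a m`. The
first one is normalised so that the circle centred at `(2, 0)` has radius `1`. -/
def diagonalRadius (a : ℕ → ℝ) : ℕ → ℝ
  | 0 => 0
  | 1 => Real.tan (a 1 / 2)
  | m + 2 => diagonalRadius a (m + 1) * Real.tan (a (m + 1))

variable {a : ℕ → ℝ}

theorem diagonalRadius_pos (ha : ∀ m, a (m + 1) ∈ Ioo 0 (π / 2)) :
    ∀ m, 0 < diagonalRadius a (m + 1)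
  | 0 => Real.tan_pos_of_pos_of_lt_pi_div_two (by linarith [(ha 0).1])
      (by linarith [(ha 0).2, Real.pi_pos])
  | m + 1 => mul_pos (diagonalRadius_pos ha m)
      (Real.tan_pos_of_pos_of_lt_pi_div_two (ha m).1 (ha m).2)

theorem radius_one_diagonalRadius (ha₀ : a 0 = π / 2) (ha : ∀ m, a (m + 1) ∈ Ioo 0 (π / 2))
    (htan : ∀ m : ℕ, Real.tan (sideAngle (a (m + 1)) (a (m + 2))) =
      ((m + 2) * Real.tan (sideAngle (a m) (a (m + 1))) + Real.tan (a (m + 1))) /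
        ((m + 1) * Real.tan (a (m + 1)) ^ 2)) (m : ℕ) :
    radius (diagonalRadius a) 1 m =
      diagonalRadius a (m + 1) * Real.tan (sideAngle (a m) (a (m + 1))) := by
  induction m with
  | zero =>
    have hpos : 0 < Real.tan (a 1 / 2) := diagonalRadius_pos ha 0
    have hangle : sideAngle (a 0) (a 1) = π / 2 - a 1 / 2 := by
      rw [sideAngle, ha₀]
      ring
    rw [radius_zero_right rfl, hangle, Real.tan_pi_div_two_sub, Nat.cast_one]
    exact (mul_inv_cancel₀ hpos.ne').symm
  | succ m ih =>
    have hd := diagonalRadius_pos ha m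
    have ht := Real.tan_pos_of_pos_of_lt_pi_div_two (ha m).1 (ha m).2
    rw [htan, radius, ih]
    simp only [radius_zero_left, diagonalRadius]
    push_cast
    field_simp
    ring

theorem diagonalRadius_eq_mul_tan (ha₀ : a 0 = π / 2) (ha : ∀ m, a (m + 1) ∈ Ioo 0 (π / 2))
    (m : ℕ) : diagonalRadius a m = diagonalRadius a (m + 1) * Real.tan (π / 2 - a m) := by
  cases m with
  | zero => simp [diagonalRadius, ha₀]
  | succ m =>
    have ht := Real.tan_pos_of_pos_of_lt_pi_div_two (ha m).1 (ha m).2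
    rw [Real.tan_pi_div_two_sub, diagonalRadius, mul_inv_cancel_right₀ ht.ne']

theorem exists_diagonal_radii : ∃ d : ℕ → ℝ, d 0 = 0 ∧ (∀ m, 0 < d (m + 1)) ∧
    ∀ m, cotAdd (d (m + 1)) (d m) (radius d 1 m) +
      cotAdd (d (m + 1)) (radius d 1 m) (d (m + 2)) = 0 := by
  obtain ⟨a, ha₀, ha, htan⟩ := exists_diagonal_angles
  refine ⟨diagonalRadius a, rfl, diagonalRadius_pos ha, fun m ↦ ?_⟩
  have hr := (diagonalRadius_pos ha m).ne'
  have ha_mem : a m ∈ Ioc 0 (π / 2) := by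
    cases m with
    | zero => rw [ha₀]; exact ⟨Real.pi_div_two_pos, le_rfl⟩
    | succ m => exact ⟨(ha m).1, (ha m).2.le⟩
  have hsin : Real.cos (π / 2 - a m) ≠ 0 := by
    rw [Real.cos_pi_div_two_sub]
    exact (Real.sin_pos_of_pos_of_lt_pi ha_mem.1 (by linarith [ha_mem.2, Real.pi_pos])).ne'
  have hcos := (cos_pos_of_mem_Ioo (sideAngle_mem_Ioo (Ioc_subset_Icc_self ha_mem) (ha m))).ne'
  have hcos' := (cos_pos_of_mem_Ioo (ha m)).ne'
  have hnext : diagonalRadius a (m + 2) = diagonalRadius a (m + 1) * Real.tan (a (m + 1)) := by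
    rw [diagonalRadius]
  rw [diagonalRadius_eq_mul_tan ha₀ ha m, radius_one_diagonalRadius ha₀ ha htan, hnext,
    cotAdd_mul_tan hr hsin hcos, cotAdd_mul_tan hr hcos hcos']
  apply cot_add_cot_eq_zero
  rw [sideAngle]
  ring

end Angles

section Lattice

variable {d : ℕ → ℝ} {R : ℕ → ℕ → ℝ}

/-- The radii of the orthogonal circle pattern of the discrete `Z^2`. The circles are centred at
the lattice points `(n, m)` with `n + m` even; the other values of `R` are irrelevant. -/
structure IsZ2Radii (R : ℕ → ℕ → ℝ) : Prop where
  pos {n m : ℕ} : Even (n + m) → (n, m) ≠ (0, 0) → 0 < R n m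
  comm (n m : ℕ) : R n m = R m n
  axis (k : ℕ) : R (2 * k) 0 = k
  mul_succ (k : ℕ) : R (2 * k + 3) 1 * R (2 * k + 1) 1 = (k + 1) ^ 2
  schrammEq {n m : ℕ} : Even (n + m) →
    SchrammEq (R (n + 1) (m + 1)) (R (n + 2) (m + 2)) (R n (m + 2)) (R n m) (R (n + 2) m)

/-- The circle radii on the whole quadrant, extending those below the diagonal by symmetry. -/
def quadrantRadius (d : ℕ → ℝ) (n m : ℕ) : ℝ := radius d (Nat.dist n m / 2) (min n m)

theorem quadrantRadius_comm (d : ℕ → ℝ) (n m : ℕ) :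
    quadrantRadius d n m = quadrantRadius d m n := by
  rw [quadrantRadius, quadrantRadius, Nat.dist_comm, min_comm]

theorem quadrantRadius_add_two_mul (d : ℕ → ℝ) (k m : ℕ) :
    quadrantRadius d (m + 2 * k) m = radius d k m := by
  simp [quadrantRadius, Nat.dist_eq_sub_of_le_right]

theorem schrammEq_quadrantRadius (hd : d 0 = 0) (hpos : ∀ m, 0 < d (m + 1))
    (hdiag : ∀ m, cotAdd (d (m + 1)) (d m) (radius d 1 m) +
      cotAdd (d (m + 1)) (radius d 1 m) (d (m + 2)) = 0) (k m : ℕ) :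
    SchrammEq (quadrantRadius d (m + 2 * k + 1) (m + 1))
      (quadrantRadius d (m + 2 * k + 2) (m + 2)) (quadrantRadius d (m + 2 * k) (m + 2))
      (quadrantRadius d (m + 2 * k) m) (quadrantRadius d (m + 2 * k + 2) m) := by
  have h_center := quadrantRadius_add_two_mul d k (m + 1)
  have h_northeast := quadrantRadius_add_two_mul d k (m + 2)
  have h_southwest := quadrantRadius_add_two_mul d k m
  have h_southeast := quadrantRadius_add_two_mul d (k + 1) m
  rw [show m + 1 + 2 * k = m + 2 * k + 1 by ring] at h_center
  rw [show m + 2 + 2 * k = m + 2 * k + 2 by ring] at h_northeast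
  rw [show m + 2 * (k + 1) = m + 2 * k + 2 by ring] at h_southeast
  rw [h_center, h_northeast, h_southwest, h_southeast]
  have pos := radius_pos hd hpos
  cases k with
  | zero =>
    have h_northwest : quadrantRadius d (m + 2 * 0) (m + 2) = radius d 1 m := by
      rw [quadrantRadius_comm, ← quadrantRadius_add_two_mul d 1 m]
      simp
    have hsum (i : ℕ) : 0 < d i + radius d 1 m :=
      add_pos_of_nonneg_of_pos (radius_zero_left d i ▸ radius_nonneg hd hpos 0 i)
        (pos 1 m (by lia))
    have h := hdiag m
    rw [cotAdd_comm _ (radius d 1 m) (d (m + 2)),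
      cotAdd_add_cotAdd_eq_zero_iff (hpos m).ne' (hsum m).ne' (hsum (m + 2)).ne'] at h
    simpa only [h_northwest, radius_zero_left, zero_add] using h.rotate.rotate
  | succ k =>
    have h_northwest := quadrantRadius_add_two_mul d k (m + 2)
    rw [show m + 2 + 2 * k = m + 2 * (k + 1) by ring] at h_northwest
    rw [h_northwest]
    exact schrammEq_radius_succ hd hpos (petalRel_northwest_radius hd hpos hdiag k) m

theorem of_even_add {p : ℕ → ℕ → Prop} (hsymm : ∀ n m, p n m → p m n)
    (h : ∀ k m, p (m + 2 * k) m) {n m : ℕ} (hnm : Even (n + m)) : p n m := by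
  have key {n m : ℕ} (hnm : Even (n + m)) (hle : m ≤ n) : p n m := by
    obtain ⟨k, hk⟩ := (Nat.even_sub hle).mpr (Nat.even_add.mp hnm)
    rw [show n = m + 2 * k by lia]
    exact h k m
  rcases le_total m n with hle | hle
  · exact key hnm hle
  · exact hsymm _ _ (key (add_comm n m ▸ hnm) hle)

theorem isZ2Radii_quadrantRadius (hd : d 0 = 0) (hpos : ∀ m, 0 < d (m + 1))
    (hdiag : ∀ m, cotAdd (d (m + 1)) (d m) (radius d 1 m) +
      cotAdd (d (m + 1)) (radius d 1 m) (d (m + 2)) = 0) : IsZ2Radii (quadrantRadius d) where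
  pos {n m} hnm := by
    refine of_even_add (p := fun n m ↦ (n, m) ≠ (0, 0) → 0 < quadrantRadius d n m)
      (fun _ _ h h₀ ↦ ?_) (fun k m h₀ ↦ ?_) hnm
    · exact quadrantRadius_comm d _ _ ▸ h (by simpa [and_comm] using h₀)
    · rw [quadrantRadius_add_two_mul]
      exact radius_pos hd hpos k m fun h ↦ h₀ (by simp; lia)
  comm := quadrantRadius_comm d
  axis k := by
    have h := quadrantRadius_add_two_mul d k 0
    rwa [zero_add, radius_zero_right hd] at h
  mul_succ k := by
    have h₁ := quadrantRadius_add_two_mul d k 1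
    have h₂ := quadrantRadius_add_two_mul d (k + 1) 1
    rw [show 2 * k + 3 = 1 + 2 * (k + 1) by ring, add_comm (2 * k), h₁, h₂]
    exact radius_one_mul_radius_one hd hpos <| by
      simpa using petalRel_northwest_radius hd hpos hdiag k 0
  schrammEq {n m} hnm := by
    refine of_even_add (p := fun n m ↦ SchrammEq (quadrantRadius d (n + 1) (m + 1))
      (quadrantRadius d (n + 2) (m + 2)) (quadrantRadius d n (m + 2)) (quadrantRadius d n m)
      (quadrantRadius d (n + 2) m)) (fun n m h ↦ ?_) (schrammEq_quadrantRadius hd hpos hdiag) hnm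
    simpa only [quadrantRadius_comm d (m + 1), quadrantRadius_comm d (m + 2),
      quadrantRadius_comm d m] using h.mirror

theorem exists_isZ2Radii : ∃ R, IsZ2Radii R ∧ R 1 1 = 2 / Real.pi := by
  obtain ⟨d, hd, hpos, hdiag⟩ := exists_diagonal_radii
  refine ⟨quadrantRadius d, isZ2Radii_quadrantRadius hd hpos hdiag, ?_⟩
  have h := quadrantRadius_add_two_mul d 0 1
  rw [mul_zero, add_zero, radius_zero_left] at h
  rw [h]
  exact diagonal_one_eq_two_div_pi hd hpos fun k ↦ radius_one_mul_radius_one hd hpos <| by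
    simpa using petalRel_northwest_radius hd hpos hdiag k 0

end Lattice

section Kites

variable {R : ℕ → ℕ → ℝ}

/-- The value of `edgeRatio` at `(n, m)` for the circle pattern with radii `R`: the elementary
quadrilateral is a kite whose long diagonal joins the centres of two orthogonal circles, and the
first corner is a centre of a circle if `n + m` is even and an intersection point otherwise. -/
def kiteRatio (R : ℕ → ℕ → ℝ) (n m : ℕ) : ℂ :=
  if Even (n + m) then (R n m + I * R (n + 1) (m + 1)) / (R n m - I * R (n + 1) (m + 1))
  else I * R n (m + 1) / R (n + 1) m

theorem kiteRatio_of_even {n m : ℕ} (h : Even (n + m)) :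
    kiteRatio R n m = (R n m + I * R (n + 1) (m + 1)) / (R n m - I * R (n + 1) (m + 1)) :=
  if_pos h

theorem kiteRatio_of_odd {n m : ℕ} (h : Odd (n + m)) :
    kiteRatio R n m = I * R n (m + 1) / R (n + 1) m :=
  if_neg (Nat.not_even_iff_odd.mpr h)

theorem add_I_mul_ne_zero {a b : ℝ} (hb : b ≠ 0) : (a + I * b : ℂ) ≠ 0 := fun h ↦ by
  simpa [hb] using congrArg im h

theorem sub_I_mul_ne_zero {a b : ℝ} (hb : b ≠ 0) : (a - I * b : ℂ) ≠ 0 := fun h ↦ by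
  simpa [hb] using congrArg im h

theorem cayley_add_I_mul_div_sub {a b : ℝ} (hb : b ≠ 0) :
    cayley ((a + I * b) / (a - I * b)) = I * b / a := by
  have hsub := sub_I_mul_ne_zero (a := a) hb
  rw [cayley, div_sub_one hsub, div_add_one hsub, div_div_div_cancel_right₀ hsub]
  rw [show a + I * b - (a - I * b) = 2 * (I * b) by ring,
    show a + I * b + (a - I * b) = 2 * (a : ℂ) by ring, mul_div_mul_left _ _ two_ne_zero]

theorem cayley_I_mul_div {a b : ℝ} (ha : a ≠ 0) :
    cayley (I * b / a) = (I * b - a) / (I * b + a) := by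
  have ha' : (a : ℂ) ≠ 0 := ofReal_ne_zero.mpr ha
  rw [cayley, div_sub_one ha', div_add_one ha', div_div_div_cancel_right₀ ha']

theorem add_I_mul_div_sub_im_pos {a b : ℝ} (ha : 0 < a) (hb : 0 < b) :
    0 < ((a + I * b : ℂ) / (a - I * b)).im := by
  have h : ((a + I * b : ℂ) / (a - I * b)).im = 2 * a * b / normSq (a - I * b) := by
    rw [div_im]
    simp only [add_im, ofReal_im, mul_im, I_re, mul_zero, I_im, ofReal_re, one_mul, zero_add,
      sub_re, mul_re, zero_mul, sub_self, sub_zero, add_re, add_zero, sub_im, zero_sub, mul_neg]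
    ring
  rw [h]
  exact div_pos (by positivity) (normSq_pos.mpr (sub_I_mul_ne_zero hb.ne'))

/-- The arguments of the four kites at the centre of a circle add up to `0` modulo `2 * π`. -/
theorem SchrammEq.add_I_mul_div_sub {r a b c d : ℝ} (h : SchrammEq r a b c d) (hr : r ≠ 0) :
    (r + I * a : ℂ) / (r - I * a) = (c + I * r) / (c - I * r) *
      ((I * b - r) / (I * b + r) / ((I * r - d) / (I * r + d))) := by
  have ne_zero {z : ℂ} (hz : z.re ≠ 0 ∨ z.im ≠ 0) : z ≠ 0 := by
    rintro rfl
    simp at hz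
  have ha : (r - I * a : ℂ) ≠ 0 := ne_zero (.inl (by simpa))
  have hb : (I * b + r : ℂ) ≠ 0 := ne_zero (.inl (by simpa))
  have hc : (c - I * r : ℂ) ≠ 0 := ne_zero (.inr (by simpa))
  have hd : (I * r - d : ℂ) ≠ 0 := ne_zero (.inr (by simpa))
  rw [SchrammEq] at h
  rw [div_div_div_eq, div_mul_div_comm, div_eq_div_iff ha (mul_ne_zero hc (mul_ne_zero hb hd))]
  apply Complex.ext
  · simp only [mul_re, add_re, ofReal_re, I_re, zero_mul, I_im, ofReal_im, mul_zero, sub_self,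
      add_zero, sub_re, sub_zero, zero_add, zero_sub, mul_neg, add_im, mul_im, one_mul, sub_im,
      neg_mul, sub_neg_eq_add]
    ring
  · simp only [mul_im, add_re, ofReal_re, mul_re, I_re, zero_mul, I_im, ofReal_im, mul_zero,
      sub_self, add_zero, sub_re, sub_zero, zero_add, sub_im, one_mul, add_im, zero_sub, mul_neg,
      neg_mul, sub_neg_eq_add]
    linear_combination 2 * r * h

namespace IsZ2Radii

variable (hR : IsZ2Radii R) {n m : ℕ}
include hR

theorem kiteRatio_im_pos (h : (n, m) ≠ (0, 0)) : 0 < (kiteRatio R n m).im := by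
  rcases (n + m).even_or_odd with hnm | hnm
  · rw [kiteRatio_of_even hnm]
    exact add_I_mul_div_sub_im_pos (hR.pos hnm h) (hR.pos (by grind) (by simp))
  · have h₁ : 0 < R n (m + 1) := hR.pos (by grind) (by simp)
    have h₂ : 0 < R (n + 1) m := hR.pos (by grind) (by simp)
    rw [kiteRatio_of_odd hnm, div_ofReal_im]
    simpa using div_pos h₁ h₂

theorem kiteRatio_zero_zero : kiteRatio R 0 0 = -1 := by
  have h : R 1 1 ≠ 0 := (hR.pos (by decide) (by simp)).ne'
  have h₀ : R 0 0 = 0 := mod_cast hR.axis 0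
  rw [kiteRatio_of_even (by decide), h₀]
  simp only [ofReal_zero, zero_add, zero_sub, div_neg]
  rw [div_self (mul_ne_zero I_ne_zero (ofReal_ne_zero.mpr h))]

theorem kiteRatio_succ_succ (n m : ℕ) : kiteRatio R (n + 1) (m + 1) =
    kiteRatio R n m * (cayley (kiteRatio R n (m + 1)) / cayley (kiteRatio R (n + 1) m)) := by
  rcases (n + m).even_or_odd with hnm | hnm
  · have hr : R (n + 1) (m + 1) ≠ 0 := (hR.pos (by grind) (by simp)).ne'
    have hd : R (n + 2) m ≠ 0 := (hR.pos (by grind) (by simp)).ne'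
    rw [kiteRatio_of_even (by grind), kiteRatio_of_even hnm, kiteRatio_of_odd (by grind),
      kiteRatio_of_odd (by grind), cayley_I_mul_div hr, cayley_I_mul_div hd]
    exact (hR.schrammEq hnm).add_I_mul_div_sub hr
  · have ha : (R (n + 1) m : ℂ) ≠ 0 := ofReal_ne_zero.mpr (hR.pos (by grind) (by simp)).ne'
    have hb : (R n (m + 1) : ℂ) ≠ 0 := ofReal_ne_zero.mpr (hR.pos (by grind) (by simp)).ne'
    have hc : R (n + 1) (m + 2) ≠ 0 := (hR.pos (by grind) (by simp)).ne'
    have hd : R (n + 2) (m + 1) ≠ 0 := (hR.pos (by grind) (by simp)).ne'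
    rw [kiteRatio_of_odd (by grind), kiteRatio_of_odd hnm, kiteRatio_of_even (by grind),
      kiteRatio_of_even (by grind), cayley_add_I_mul_div_sub hc, cayley_add_I_mul_div_sub hd]
    field_simp

theorem kiteRatio_one_zero : kiteRatio R 1 0 = I * R 1 1 := by
  have h : R 2 0 = 1 := mod_cast hR.axis 1
  rw [kiteRatio_of_odd (by decide), h]
  simp

theorem kiteRatio_axis_succ (n : ℕ) : kiteRatio R (n + 2) 0 * ((n + 3) / 2 : ℕ) =
    cayley (kiteRatio R (n + 1) 0) * ((n + 2) / 2 : ℕ) := by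
  rcases n.even_or_odd' with ⟨k, rfl | rfl⟩
  · have hr : R (2 * k + 1) 1 ≠ 0 := (hR.pos (by grind) (by simp)).ne'
    have hr' : R (2 * k + 3) 1 ≠ 0 := (hR.pos (by grind) (by simp)).ne'
    have haxis : R (2 * k + 2) 0 = k + 1 := mod_cast hR.axis (k + 1)
    have hmul : (R (2 * k + 3) 1 * R (2 * k + 1) 1 : ℂ) = (k + 1) ^ 2 := mod_cast hR.mul_succ k
    rw [kiteRatio_of_even (by grind), kiteRatio_of_odd (by grind), haxis,
      cayley_I_mul_div (by positivity), show (2 * k + 3) / 2 = k + 1 by lia,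
      show (2 * k + 2) / 2 = k + 1 by lia]
    congr 1
    rw [div_eq_div_iff (sub_I_mul_ne_zero hr') (add_comm (I * _) _ ▸ add_I_mul_ne_zero hr)]
    push_cast
    linear_combination -2 * hmul + 2 * (R (2 * k + 3) 1 * R (2 * k + 1) 1 : ℂ) * I_sq
  · have hr : R (2 * k + 3) 1 ≠ 0 := (hR.pos (by grind) (by simp)).ne'
    have haxis : R (2 * k + 2) 0 = k + 1 := mod_cast hR.axis (k + 1)
    have haxis' : R (2 * k + 4) 0 = k + 2 := mod_cast hR.axis (k + 2)
    rw [kiteRatio_of_odd (by grind), kiteRatio_of_even (by grind), haxis, haxis',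
      cayley_add_I_mul_div_sub hr,
      show (2 * k + 1 + 3) / 2 = k + 2 by lia, show (2 * k + 1 + 2) / 2 = k + 1 by lia]
    push_cast
    have hk : (k + 2 : ℂ) ≠ 0 := mod_cast (by lia : k + 2 ≠ 0)
    have hk' : (k + 1 : ℂ) ≠ 0 := mod_cast (by lia : k + 1 ≠ 0)
    rw [div_mul_cancel₀ _ hk, div_mul_cancel₀ _ hk']

open ComplexConjugate in
theorem kiteRatio_comm (n m : ℕ) : kiteRatio R m n = (conj (kiteRatio R n m))⁻¹ := by
  rcases (n + m).even_or_odd with hnm | hnm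
  · rw [kiteRatio_of_even hnm, kiteRatio_of_even (add_comm n m ▸ hnm), hR.comm m, hR.comm (m + 1)]
    simp [sub_eq_add_neg]
  · rw [kiteRatio_of_odd hnm, kiteRatio_of_odd (add_comm n m ▸ hnm), hR.comm m, hR.comm (m + 1)]
    simp [div_eq_mul_inv, mul_assoc, mul_comm]

end IsZ2Radii

end Kites

section Identification

open ComplexConjugate

theorem eq_floor_mul_ceil_of_constraint {K : Type*} [Field K] [CharZero K] {u : ℕ → K}
    (h₀ : u 0 = 0) (h₁ : u 1 = 0) (h₂ : u 2 = 1)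
    (hu : ∀ n : ℕ, 2 * u (n + 1) * (u (n + 2) - u n) =
      2 * (n + 1) * ((u (n + 2) - u (n + 1)) * (u (n + 1) - u n))) (n : ℕ) :
    u n = (n / 2 : ℕ) * ((n + 1) / 2 : ℕ) := by
  induction n using Nat.twoStepInduction with
  | zero => simp [h₀]
  | one => simp [h₁]
  | more n ih₀ ih₁ =>
    rcases n.eq_zero_or_pos with rfl | hn
    · simp [h₂]
    have hq : (((n + 1) / 2 : ℕ) : K) ≠ 0 := Nat.cast_ne_zero.mpr (by lia)
    have hn' : (n : K) = (n / 2 : ℕ) + ((n + 1) / 2 : ℕ) := by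
      rw [← Nat.cast_add]
      congr 1
      lia
    have h := hu n
    rw [show n + 1 + 1 = n + 2 by rfl, show (n + 2) / 2 = n / 2 + 1 by lia] at ih₁
    rw [show (n + 2) / 2 = n / 2 + 1 by lia,
      show (n + 2 + 1) / 2 = (n + 1) / 2 + 1 by lia]
    rw [ih₀, ih₁, hn'] at h
    push_cast at h ⊢
    apply mul_left_cancel₀ (mul_ne_zero two_ne_zero (pow_ne_zero 2 hq))
    linear_combination -h

variable {f : ℕ → ℕ → ℂ} {R : ℕ → ℕ → ℝ}

/-- The reflection of the lattice `f` that interchanges the two lattice directions. -/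
def diagonalReflection (f : ℕ → ℕ → ℂ) (n m : ℕ) : ℂ := -conj (f m n)

theorem CrossRatioEq'.reflect (hq : CrossRatioEq' f) : CrossRatioEq' (diagonalReflection f) := by
  intro n m
  have h := congrArg conj (hq m n)
  simp only [map_add, map_sub, map_mul, map_zero] at h
  simp only [diagonalReflection]
  linear_combination h

theorem edgeRatio_diagonalReflection (f : ℕ → ℕ → ℂ) (n m : ℕ) :
    edgeRatio (diagonalReflection f) n m = (conj (edgeRatio f m n))⁻¹ := by
  simp only [edgeRatio, vertEdge, horizEdge, diagonalReflection, map_div₀, map_sub, inv_div]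
  rw [← neg_div_neg_eq]
  ring

theorem CrossRatioEq'.neg_horizEdge_div_vertEdge (hq : CrossRatioEq' f) {n m : ℕ}
    (hw : 0 < (edgeRatio f n m).im) :
    -(horizEdge f n (m + 1) / vertEdge f (n + 1) m) = edgeRatio f n m := by
  rw [hq.horizEdge_succ (horizEdge_ne_zero hw) (add_one_ne_zero_of_im_pos hw),
    hq.vertEdge_succ (horizEdge_ne_zero hw) (add_one_ne_zero_of_im_pos hw), neg_mul, neg_div,
    neg_neg, mul_div_mul_left _ _ (ne_zero_of_im_pos (cayley_im_pos hw)), edgeRatio]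

theorem CrossRatioEq'.edgeRatio_succ_succ (hq : CrossRatioEq' f) {n m : ℕ}
    (h₁ : 0 < (edgeRatio f (n + 1) m).im) (h₂ : 0 < (edgeRatio f n (m + 1)).im) :
    edgeRatio f (n + 1) (m + 1) = -(horizEdge f n (m + 1) / vertEdge f (n + 1) m) *
      (cayley (edgeRatio f n (m + 1)) / cayley (edgeRatio f (n + 1) m)) := by
  rw [edgeRatio, hq.vertEdge_succ (horizEdge_ne_zero h₂) (add_one_ne_zero_of_im_pos h₂),
    hq.horizEdge_succ (horizEdge_ne_zero h₁) (add_one_ne_zero_of_im_pos h₁)]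
  ring

theorem edgeRatio_horizontal_axis (hq : CrossRatioEq' f) (hR : IsZ2Radii R)
    (h00 : f 0 0 = 0) (h10 : f 1 0 = 0) (h20 : f 2 0 = 1)
    (hc : ∀ n : ℕ, 2 * f (n + 1) 0 * (f (n + 2) 0 - f n 0) =
      2 * (n + 1) * ((f (n + 2) 0 - f (n + 1) 0) * (f (n + 1) 0 - f n 0)))
    (h11 : f 1 1 = I * R 1 1) (n : ℕ) : edgeRatio f (n + 1) 0 = kiteRatio R (n + 1) 0 := by
  have hf (n : ℕ) : f n 0 = (n / 2 : ℕ) * ((n + 1) / 2 : ℕ) :=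
    eq_floor_mul_ceil_of_constraint (u := fun n ↦ f n 0) h00 h10 h20 hc n
  have h_edge (n : ℕ) : horizEdge f n 0 = ((n + 1) / 2 : ℕ) := by
    rw [horizEdge, hf, hf, show (n + 1 + 1) / 2 = n / 2 + 1 by lia]
    push_cast
    ring
  induction n with
  | zero => simp [hR.kiteRatio_one_zero, edgeRatio, h_edge, vertEdge, h11, hf]
  | succ n ih =>
    have hw := ih ▸ hR.kiteRatio_im_pos (n := n + 1) (m := 0) (by simp)
    rw [edgeRatio, hq.vertEdge_succ (horizEdge_ne_zero hw) (add_one_ne_zero_of_im_pos hw), ih,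
      h_edge, h_edge, div_eq_iff (Nat.cast_ne_zero.mpr (by lia))]
    exact (hR.kiteRatio_axis_succ n).symm

theorem edgeRatio_vertical_axis (hq : CrossRatioEq' f) (hR : IsZ2Radii R)
    (h00 : f 0 0 = 0) (h01 : f 0 1 = 0) (h02 : f 0 2 = -1)
    (hc : ∀ m : ℕ, 2 * f 0 (m + 1) * (f 0 (m + 2) - f 0 m) =
      2 * (m + 1) * ((f 0 (m + 2) - f 0 (m + 1)) * (f 0 (m + 1) - f 0 m)))
    (h11 : f 1 1 = I * R 1 1) (m : ℕ) : edgeRatio f 0 (m + 1) = kiteRatio R 0 (m + 1) := by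
  have hc' (m : ℕ) := congrArg conj (hc m)
  simp only [map_mul, map_sub, map_ofNat, map_add, map_natCast, map_one] at hc'
  have h := edgeRatio_horizontal_axis hq.reflect hR (by simp [diagonalReflection, h00])
    (by simp [diagonalReflection, h01]) (by simp [diagonalReflection, h02])
    (fun n ↦ by simp only [diagonalReflection]; linear_combination hc' n)
    (by simp [diagonalReflection, h11]) m
  rwa [edgeRatio_diagonalReflection, hR.kiteRatio_comm, inv_inj,
    (starRingEnd ℂ).injective.eq_iff] at h

theorem edgeRatio_eq_kiteRatio (hq : CrossRatioEq' f) (hR : IsZ2Radii R)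
    (hx : ∀ n, edgeRatio f (n + 1) 0 = kiteRatio R (n + 1) 0)
    (hy : ∀ m, edgeRatio f 0 (m + 1) = kiteRatio R 0 (m + 1))
    (h_origin : horizEdge f 0 1 = vertEdge f 1 0) :
    ∀ n m, (n, m) ≠ (0, 0) → edgeRatio f n m = kiteRatio R n m
  | 0, 0, h => absurd rfl h
  | n + 1, 0, _ => hx n
  | 0, m + 1, _ => hy m
  | n + 1, m + 1, _ => by
    have h₁ := edgeRatio_eq_kiteRatio hq hR hx hy h_origin (n + 1) m (by simp)
    have h₂ := edgeRatio_eq_kiteRatio hq hR hx hy h_origin n (m + 1) (by simp)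
    have h_pos₁ := h₁ ▸ hR.kiteRatio_im_pos (n := n + 1) (m := m) (by simp)
    have h_pos₂ := h₂ ▸ hR.kiteRatio_im_pos (n := n) (m := m + 1) (by simp)
    have h_corner : -(horizEdge f n (m + 1) / vertEdge f (n + 1) m) = kiteRatio R n m := by
      by_cases h : (n, m) = (0, 0)
      · obtain ⟨rfl, rfl⟩ := Prod.mk.inj h
        rw [hR.kiteRatio_zero_zero, h_origin, div_self (vertEdge_ne_zero h_pos₁)]
      · have h₀ := edgeRatio_eq_kiteRatio hq hR hx hy h_origin n m h
        rw [hq.neg_horizEdge_div_vertEdge (h₀ ▸ hR.kiteRatio_im_pos h), h₀]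
    rw [hq.edgeRatio_succ_succ h_pos₁ h_pos₂, h_corner, h₁, h₂, hR.kiteRatio_succ_succ]

end Identification

theorem discrete_Z2_is_immersion_general (f : ℕ → ℕ → ℂ) (hq : CrossRatioEq' f)
    (hcx : ∀ n : ℕ, 2 * f (n + 1) 0 * (f (n + 2) 0 - f n 0) =
      2 * (n + 1) * ((f (n + 2) 0 - f (n + 1) 0) * (f (n + 1) 0 - f n 0)))
    (hcy : ∀ m : ℕ, 2 * f 0 (m + 1) * (f 0 (m + 2) - f 0 m) =
      2 * (m + 1) * ((f 0 (m + 2) - f 0 (m + 1)) * (f 0 (m + 1) - f 0 m)))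
    (h00 : f 0 0 = 0) (h10 : f 1 0 = 0) (h01 : f 0 1 = 0) (h20 : f 2 0 = 1) (h02 : f 0 2 = -1)
    (h11 : f 1 1 = 2 * I / (Real.pi : ℂ)) :
    IsImmersion f := by
  obtain ⟨R, hR, hR11⟩ := exists_isZ2Radii
  have h11' : f 1 1 = I * R 1 1 := by
    rw [h11, hR11]
    push_cast
    ring
  have hx := edgeRatio_horizontal_axis hq hR h00 h10 h20 hcx h11'
  have hy := edgeRatio_vertical_axis hq hR h00 h01 h02 hcy h11'
  refine isImmersion_of_edgeRatio_im_pos hq (h10.trans h00.symm) (h01.trans h00.symm) fun n m h ↦ ?_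
  rw [edgeRatio_eq_kiteRatio hq hR hx hy (by simp [horizEdge, vertEdge, h01, h10]) n m h]
  exact hR.kiteRatio_im_pos h

/-- The discrete `Z^2` is an immersion. -/
theorem discrete_Z2_is_immersion (f : ℕ → ℕ → ℂ)
    (hq : CrossRatioEq' f) (hc : ConstraintC' 2 f)
    (h00 : f 0 0 = 0) (h10 : f 1 0 = 0) (h01 : f 0 1 = 0)
    (h20 : f 2 0 = 1) (h02 : f 0 2 = -1)
    (h11 : f 1 1 = 2 * Complex.I / (Real.pi : ℂ)) :
    IsImmersion f :=
  discrete_Z2_is_immersion_general f hq (fun n ↦ by simpa using hc (n + 1) 0)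
    (fun m ↦ by simpa using hc 0 (m + 1)) h00 h10 h01 h20 h02 h11

end
end

section
/- Let N, M be integers with M > |N|, and let a, b, c, d, e be positive real numbers (representing R(z), R(z+1), R(z+i), R(z−1), R(z−i) at z = N + iM). If (N+M)(a² − cd)(d + e) + (M−N)(a² − de)(c + d) = 0 (equation (Le) at z) and (N+M)(a² − be)(e + d) + (N−M)(a² − ed)(b + e) = 0 (equation (Dn) at z), then (a² − cd)(b + e) + (a² − be)(c + d) = 0, which is equivalent to equation (lnR) at z: a²(b + c + d + e) = (1/b + 1/c + 1/d + 1/e) · bcde. -/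
/-!
Write `p = N + M` and `q = M − N`. The combination `(b + e)·(Le) + (c + d)·(Dn)` eliminates
`a² − de`: the terms with coefficients `q` and `−q` cancel, which leaves
`p(d + e)·((a² − cd)(b + e) + (a² − be)(c + d)) = 0`, where `p(d + e) ≠ 0`. The last factor is
(lnR) cleared of denominators.
-/

theorem cleared_lnR_of_Le_of_Dn {R : Type*} [CommRing R] [NoZeroDivisors R]
    {p q a b c d e : R} (hp : p ≠ 0) (hde : d + e ≠ 0)
    (hLe : p * (a ^ 2 - c * d) * (d + e) + q * (a ^ 2 - d * e) * (c + d) = 0)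
    (hDn : p * (a ^ 2 - b * e) * (e + d) + -q * (a ^ 2 - e * d) * (b + e) = 0) :
    (a ^ 2 - c * d) * (b + e) + (a ^ 2 - b * e) * (c + d) = 0 := by
  have eliminated :
      p * (d + e) * ((a ^ 2 - c * d) * (b + e) + (a ^ 2 - b * e) * (c + d)) = 0 := by
    linear_combination (b + e) * hLe + (c + d) * hDn
  exact (mul_eq_zero.mp eliminated).resolve_left (mul_ne_zero hp hde)

section Field

variable {K : Type*} [Field K] {b c d e : K}

theorem sum_one_div_mul_prod (hb : b ≠ 0) (hc : c ≠ 0) (hd : d ≠ 0) (he : e ≠ 0) :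
    (1 / b + 1 / c + 1 / d + 1 / e) * (b * c * d * e) =
      c * d * e + b * d * e + b * c * e + b * c * d := by
  field_simp

theorem cleared_lnR_iff_lnR (a : K) (hb : b ≠ 0) (hc : c ≠ 0) (hd : d ≠ 0) (he : e ≠ 0) :
    (a ^ 2 - c * d) * (b + e) + (a ^ 2 - b * e) * (c + d) = 0 ↔
      a ^ 2 * (b + c + d + e) = (1 / b + 1 / c + 1 / d + 1 / e) * (b * c * d * e) := by
  rw [sum_one_div_mul_prod hb hc hd he]
  constructor <;> intro h <;> linear_combination h

theorem Le_and_Dn_imply_lnR_general {p q a : K} (hp : p ≠ 0) (hde : d + e ≠ 0)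
    (hb : b ≠ 0) (hc : c ≠ 0) (hd : d ≠ 0) (he : e ≠ 0)
    (hLe : p * (a ^ 2 - c * d) * (d + e) + q * (a ^ 2 - d * e) * (c + d) = 0)
    (hDn : p * (a ^ 2 - b * e) * (e + d) + -q * (a ^ 2 - e * d) * (b + e) = 0) :
    ((a ^ 2 - c * d) * (b + e) + (a ^ 2 - b * e) * (c + d) = 0) ∧
    (a ^ 2 * (b + c + d + e) = (1 / b + 1 / c + 1 / d + 1 / e) * (b * c * d * e)) :=
  have cleared := cleared_lnR_of_Le_of_Dn hp hde hLe hDn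
  ⟨cleared, (cleared_lnR_iff_lnR a hb hc hd he).mp cleared⟩

end Field

/-- Claim 3) of Lemma 4 (Appendix B): equations (Le) and (Dn) at `z = N + iM`
(with `M > |N|`) imply `(a² − cd)(b + e) + (a² − be)(c + d) = 0`, which is
equivalent to equation (lnR) at `z`: `a²(b+c+d+e) = (1/b+1/c+1/d+1/e)·bcde`.
Here `a, b, c, d, e` denote `R(z), R(z+1), R(z+i), R(z−1), R(z−i)`. -/
theorem Le_and_Dn_imply_lnR (N M : ℤ) (hNM : |N| < M)
    (a b c d e : ℝ) (ha : 0 < a) (hb : 0 < b) (hc : 0 < c) (hd : 0 < d) (he : 0 < e)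
    (hLe : ((N + M : ℤ) : ℝ) * (a^2 - c*d) * (d + e) +
           ((M - N : ℤ) : ℝ) * (a^2 - d*e) * (c + d) = 0)
    (hDn : ((N + M : ℤ) : ℝ) * (a^2 - b*e) * (e + d) +
           ((N - M : ℤ) : ℝ) * (a^2 - e*d) * (b + e) = 0) :
    ((a^2 - c*d) * (b + e) + (a^2 - b*e) * (c + d) = 0) ∧
    (a^2 * (b + c + d + e) = (1/b + 1/c + 1/d + 1/e) * (b*c*d*e)) := by
  have hp : 0 < N + M := neg_lt_iff_pos_add.mp (abs_lt.mp hNM).1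
  exact Le_and_Dn_imply_lnR_general (Int.cast_ne_zero.mpr hp.ne') (add_pos hd he).ne'
    hb.ne' hc.ne' hd.ne' he.ne' hLe (by rwa [← Int.cast_neg, neg_sub])
end
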